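/- With A(q) = Y(q)/φ(q)⁴ where Y(q) = Z(q, χ₀, χ₀, χ₀, χ₀) for the principal character χ₀ mod q, the function s(p) = 1 + Σ_{α ≥ 1} A(p^α) satisfies the product lower bound ∏_{p ≤ P} s(p) ≫ (log P)^{−960} uniformly for even integers N (on which A implicitly depends). -/

import Mathlib

open Classical

noncomputable def eC (t : ℝ) : ℂ := Complex.exp (2 * Real.pi * Complex.I * t)

/-- `C_k(h, χ₀)` for the principal character `χ₀` mod `q`. -/
noncomputable def Ck0 (q k h : ℕ) : ℂ :=
  ∑ l ∈ (Finset.Icc 1 q).filter (fun l => Nat.Coprime l q), eC ((h : ℝ) * (l : ℝ) ^ k / q)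

noncomputable def Yq (q : ℕ) (N : ℤ) : ℂ :=
  ∑ h ∈ (Finset.Icc 1 q).filter (fun h => Nat.Coprime h q),
    eC (-(N : ℝ) * h / q) * Ck0 q 2 h * Ck0 q 3 h * Ck0 q 4 h * Ck0 q 5 h

noncomputable def Aq (q : ℕ) (N : ℤ) : ℂ := Yq q N / (Nat.totient q : ℂ) ^ 4

noncomputable def sFactor (p : ℕ) (N : ℤ) : ℂ := 1 + ∑' α : ℕ, Aq (p ^ (α + 1)) N

/-- The power sum `∑ ψ(a uᵏ)` over the units of `ZMod q`, with `ψ` the standard character. -/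
noncomputable def unitPowSum (q k : ℕ) [NeZero q] (a : ZMod q) : ℂ :=
  ∑ u : (ZMod q)ˣ, ZMod.stdAddChar (a * (u : ZMod q) ^ k)

lemma eC_intCast_div (q : ℕ) [NeZero q] (m : ℤ) :
    eC ((m : ℝ) / q) = ZMod.stdAddChar (m : ZMod q) := by
  rw [ZMod.stdAddChar_coe, eC]
  congr 1
  push_cast
  ring

lemma sum_filter_coprime_eq_sum_units (q : ℕ) [NeZero q] (f : ZMod q → ℂ) :
    ∑ l ∈ (Finset.Icc 1 q).filter (fun l => Nat.Coprime l q), f (l : ZMod q) =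
      ∑ u : (ZMod q)ˣ, f u := by
  have hcast : ∀ u : (ZMod q)ˣ, ((((u : ZMod q) - 1).val + 1 : ℕ) : ZMod q) = u := by
    intro u
    push_cast
    rw [ZMod.natCast_zmod_val]
    ring
  refine Finset.sum_bij' (fun l hl => ZMod.unitOfCoprime l (Finset.mem_filter.1 hl).2)
    (fun u _ => ((u : ZMod q) - 1).val + 1) ?_ ?_ ?_ ?_ ?_
  · intro l hl
    exact Finset.mem_univ _
  · intro u _
    rw [Finset.mem_filter, Finset.mem_Icc]
    refine ⟨⟨by omega, ZMod.val_lt _⟩, ?_⟩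
    rw [← ZMod.isUnit_iff_coprime, hcast]
    exact u.isUnit
  · intro l hl
    have h1 := Finset.mem_Icc.1 (Finset.mem_filter.1 hl).1
    obtain ⟨m, rfl⟩ : ∃ m, l = m + 1 := ⟨l - 1, by omega⟩
    rw [ZMod.coe_unitOfCoprime]
    push_cast
    rw [add_sub_cancel_right, ZMod.val_cast_of_lt (by omega)]
  · intro u _
    ext
    rw [ZMod.coe_unitOfCoprime, hcast]
  · intro l hl
    rw [ZMod.coe_unitOfCoprime]

lemma Ck0_eq_unitPowSum (q k h : ℕ) [NeZero q] : Ck0 q k h = unitPowSum q k (h : ZMod q) := by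
  rw [Ck0, unitPowSum,
    ← sum_filter_coprime_eq_sum_units q (fun x => ZMod.stdAddChar ((h : ZMod q) * x ^ k))]
  refine Finset.sum_congr rfl fun l _ => ?_
  have := eC_intCast_div q ((h : ℤ) * (l : ℤ) ^ k)
  push_cast at this
  exact this

lemma Yq_eq_sum_units (q : ℕ) [NeZero q] (N : ℤ) :
    Yq q N = ∑ h : (ZMod q)ˣ, ZMod.stdAddChar (-(N : ZMod q) * (h : ZMod q)) * unitPowSum q 2 h *
      unitPowSum q 3 h * unitPowSum q 4 h * unitPowSum q 5 h := by
  rw [Yq, ← sum_filter_coprime_eq_sum_units q (fun h => ZMod.stdAddChar (-(N : ZMod q) * h) *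
    unitPowSum q 2 h * unitPowSum q 3 h * unitPowSum q 4 h * unitPowSum q 5 h)]
  refine Finset.sum_congr rfl fun h _ => ?_
  have := eC_intCast_div q (-N * (h : ℤ))
  push_cast at this
  simp only [Ck0_eq_unitPowSum, this]

lemma one_add_pow_of_mul_self_eq_zero {R : Type*} [CommRing R] {x : R} (hx : x * x = 0) (k : ℕ) :
    (1 + x) ^ k = 1 + k * x := by
  induction k with
  | zero => simp
  | succ k ih =>
    rw [pow_succ, ih]
    push_cast
    linear_combination (k : R) * hx

lemma unitPowSum_prime_pow_eq_zero {p k : ℕ} (hp : p.Prime) (hk : Nat.Coprime k p) {α q : ℕ}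
    (hq : q = p ^ (α + 2)) [NeZero q] (a : (ZMod q)ˣ) : unitPowSum q k a = 0 := by
  set n : ZMod q := (p : ZMod q) ^ (α + 1) with hn
  have hn0 : n ≠ 0 := by
    intro h
    have : ((p ^ (α + 1) : ℕ) : ZMod q) = 0 := by push_cast; exact h
    rw [ZMod.natCast_eq_zero_iff, hq] at this
    have := (Nat.pow_dvd_pow_iff_le_right hp.one_lt).1 this
    omega
  have hnn : n * n = 0 := by
    have h : (p : ZMod q) ^ (α + 2) = 0 := by
      have := ZMod.natCast_self q
      rw [← Nat.cast_pow, ← hq, this]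
    rw [hn, ← pow_add, show α + 1 + (α + 1) = α + 2 + α by ring, pow_add, h, zero_mul]
  have hku : IsUnit (k : ZMod q) := (ZMod.isUnit_iff_coprime k q).2 (hq ▸ hk.pow_right _)
  have hnt : ∀ t : ZMod q, (n * t) * (n * t) = 0 := fun t => by
    linear_combination t * t * hnn
  have hunit : ∀ t : ZMod q, IsUnit (1 + n * t) := fun t =>
    IsNilpotent.isUnit_one_add ⟨2, by rw [sq, hnt]⟩
  have hshift : ∀ t : ZMod q, unitPowSum q k a =
      ∑ u : (ZMod q)ˣ, ZMod.stdAddChar ((a : ZMod q) * (u : ZMod q) ^ k) *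
        ZMod.stdAddChar (t * ((a : ZMod q) * (u : ZMod q) ^ k * (k : ZMod q) * n)) := by
    intro t
    rw [unitPowSum, ← Equiv.sum_comp (Equiv.mulRight (hunit t).unit)]
    refine Finset.sum_congr rfl fun u _ => ?_
    rw [← AddChar.map_add_eq_mul]
    congr 1
    rw [Equiv.coe_mulRight, Units.val_mul, IsUnit.unit_spec, mul_pow,
      one_add_pow_of_mul_self_eq_zero (hnt t)]
    ring
  have hsum : (q : ℂ) * unitPowSum q k a = 0 := by
    calc (q : ℂ) * unitPowSum q k a = ∑ _t : ZMod q, unitPowSum q k a := by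
          rw [Finset.sum_const, Finset.card_univ, ZMod.card, nsmul_eq_mul]
      _ = ∑ t : ZMod q, ∑ u : (ZMod q)ˣ, ZMod.stdAddChar ((a : ZMod q) * (u : ZMod q) ^ k) *
            ZMod.stdAddChar (t * ((a : ZMod q) * (u : ZMod q) ^ k * (k : ZMod q) * n)) :=
          Finset.sum_congr rfl fun t _ => hshift t
      _ = 0 := by
          rw [Finset.sum_comm]
          refine Finset.sum_eq_zero fun u _ => ?_
          rw [← Finset.mul_sum, AddChar.sum_mulShift _ (ZMod.isPrimitive_stdAddChar q), if_neg,
            Nat.cast_zero, mul_zero]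
          rw [((a.isUnit.mul (u.isUnit.pow k)).mul hku).mul_right_eq_zero]
          exact hn0
  exact (mul_eq_zero.1 hsum).resolve_left (Nat.cast_ne_zero.2 (NeZero.ne q))

lemma Aq_prime_pow_eq_zero {p : ℕ} (hp : p.Prime) (α : ℕ) (N : ℤ) : Aq (p ^ (α + 2)) N = 0 := by
  have : NeZero (p ^ (α + 2)) := ⟨pow_ne_zero _ hp.ne_zero⟩
  rw [Aq, Yq_eq_sum_units, Finset.sum_eq_zero, zero_div]
  intro h _
  rcases hp.eq_two_or_odd' with rfl | hodd
  · rw [unitPowSum_prime_pow_eq_zero Nat.prime_two (k := 3) (by norm_num) rfl h]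
    ring
  · rw [unitPowSum_prime_pow_eq_zero hp (k := 2) (Nat.coprime_two_left.2 hodd) rfl h]
    ring

lemma sFactor_eq_one_add {p : ℕ} (hp : p.Prime) (N : ℤ) : sFactor p N = 1 + Aq p N := by
  rw [sFactor, tsum_eq_single 0, zero_add, pow_one]
  intro α hα
  obtain ⟨β, rfl⟩ := Nat.exists_eq_succ_of_ne_zero hα
  exact Aq_prime_pow_eq_zero hp β N

lemma card_units_pow_eq_le {p : ℕ} [Fact p.Prime] {k : ℕ} (hk : 0 < k) (c : ZMod p) :
    (Finset.univ.filter fun v : (ZMod p)ˣ => (v : ZMod p) ^ k = c).card ≤ k := by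
  rw [← Finset.card_image_of_injective _ (Units.val_injective (α := ZMod p))]
  refine (Finset.card_le_card (t := (Polynomial.nthRoots k c).toFinset) ?_).trans
    ((Multiset.toFinset_card_le _).trans (Polynomial.card_nthRoots k c))
  intro x hx
  obtain ⟨v, hv, rfl⟩ := Finset.mem_image.1 hx
  rw [Multiset.mem_toFinset, Polynomial.mem_nthRoots hk]
  exact (Finset.mem_filter.1 hv).2

lemma card_units_zmod_prime (p : ℕ) [Fact p.Prime] :
    (Finset.univ : Finset (ZMod p)ˣ).card = p - 1 := by
  rw [Finset.card_univ, ZMod.card_units_eq_totient, Nat.totient_prime (Fact.out : p.Prime)]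

lemma sum_norm_sq_unitPowSum_le {p : ℕ} [Fact p.Prime] {k : ℕ} (hk : 0 < k) :
    ∑ a : ZMod p, ‖unitPowSum p k a‖ ^ 2 ≤ (p : ℝ) * ((p - 1 : ℕ) * k) := by
  have hsq : ∀ a : ZMod p, ((‖unitPowSum p k a‖ ^ 2 : ℝ) : ℂ) =
      ∑ u : (ZMod p)ˣ, ∑ v : (ZMod p)ˣ,
        ZMod.stdAddChar (a * ((u : ZMod p) ^ k - (v : ZMod p) ^ k)) := by
    intro a
    push_cast
    rw [← Complex.mul_conj', unitPowSum, map_sum, Finset.sum_mul_sum]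
    refine Finset.sum_congr rfl fun u _ => Finset.sum_congr rfl fun v _ => ?_
    rw [← AddChar.map_neg_eq_conj, ← AddChar.map_add_eq_mul]
    congr 1
    ring
  have hcount : (∑ a : ZMod p, ‖unitPowSum p k a‖ ^ 2 : ℝ) =
      ((p * ∑ u : (ZMod p)ˣ, (Finset.univ.filter fun v : (ZMod p)ˣ =>
        (v : ZMod p) ^ k = (u : ZMod p) ^ k).card : ℕ) : ℝ) := by
    rw [← Complex.ofReal_inj, Complex.ofReal_sum]
    simp_rw [hsq]
    rw [Finset.sum_comm, Complex.ofReal_natCast, Finset.mul_sum, Nat.cast_sum]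
    refine Finset.sum_congr rfl fun u _ => ?_
    rw [Finset.sum_comm, Finset.card_filter, Finset.mul_sum, Nat.cast_sum]
    refine Finset.sum_congr rfl fun v _ => ?_
    rw [AddChar.sum_mulShift _ (ZMod.isPrimitive_stdAddChar p), ZMod.card, mul_ite, mul_one,
      mul_zero]
    simp only [sub_eq_zero, eq_comm]
  rw [hcount]
  have : ∑ u : (ZMod p)ˣ, (Finset.univ.filter fun v : (ZMod p)ˣ =>
        (v : ZMod p) ^ k = (u : ZMod p) ^ k).card ≤ (p - 1) * k := by
    rw [← card_units_zmod_prime p, ← smul_eq_mul]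
    exact Finset.sum_le_card_nsmul _ _ _ fun u _ => card_units_pow_eq_le hk _
  exact_mod_cast Nat.mul_le_mul_left p this

lemma norm_unitPowSum_le {p : ℕ} [Fact p.Prime] {k : ℕ} (hk : 0 < k) (a : (ZMod p)ˣ) :
    ‖unitPowSum p k a‖ ≤ k * √p := by
  have hp : p.Prime := Fact.out
  have hinv : ∀ u : (ZMod p)ˣ,
      unitPowSum p k a = unitPowSum p k ((a : ZMod p) * (u : ZMod p) ^ k) := by
    intro u
    rw [unitPowSum, unitPowSum, ← Equiv.sum_comp (Equiv.mulRight u)]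
    refine Finset.sum_congr rfl fun v _ => ?_
    rw [Equiv.coe_mulRight, Units.val_mul, mul_pow]
    congr 1
    ring
  have h1 : ((p - 1 : ℕ) : ℝ) * ‖unitPowSum p k a‖ ^ 2 =
      ∑ u : (ZMod p)ˣ, ‖unitPowSum p k ((a : ZMod p) * (u : ZMod p) ^ k)‖ ^ 2 := by
    simp_rw [← hinv]
    rw [Finset.sum_const, card_units_zmod_prime, nsmul_eq_mul]
  have h2 : ∑ u : (ZMod p)ˣ, ‖unitPowSum p k ((a : ZMod p) * (u : ZMod p) ^ k)‖ ^ 2 ≤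
      k * ∑ b : ZMod p, ‖unitPowSum p k b‖ ^ 2 := by
    rw [← Finset.sum_fiberwise Finset.univ
      (fun u : (ZMod p)ˣ => (a : ZMod p) * (u : ZMod p) ^ k), Finset.mul_sum]
    refine Finset.sum_le_sum fun b _ => ?_
    have hc : (Finset.univ.filter fun u : (ZMod p)ˣ =>
        (a : ZMod p) * (u : ZMod p) ^ k = b).card ≤ k := by
      refine (Finset.card_le_card ?_).trans
        (card_units_pow_eq_le hk (((a⁻¹ : (ZMod p)ˣ) : ZMod p) * b))
      intro u hu
      rw [Finset.mem_filter] at hu ⊢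
      refine ⟨hu.1, ?_⟩
      rw [← hu.2, Units.inv_mul_cancel_left]
    rw [Finset.sum_congr rfl (g := fun _ => ‖unitPowSum p k b‖ ^ 2)
      (fun u hu => by rw [(Finset.mem_filter.1 hu).2]), Finset.sum_const, nsmul_eq_mul]
    gcongr
  have h3 := mul_le_mul_of_nonneg_left (sum_norm_sq_unitPowSum_le (p := p) hk)
    (Nat.cast_nonneg (α := ℝ) k)
  have hpos : (0 : ℝ) < ((p - 1 : ℕ) : ℝ) := by
    exact_mod_cast Nat.sub_pos_of_lt hp.one_lt
  have h4 : ‖unitPowSum p k a‖ ^ 2 ≤ (k * √p) ^ 2 := by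
    rw [mul_pow, Real.sq_sqrt (Nat.cast_nonneg _)]
    refine le_of_mul_le_mul_left ?_ hpos
    calc _ ≤ _ := h1.le.trans (h2.trans h3)
      _ = _ := by ring
  exact abs_le_of_sq_le_sq' h4 (by positivity) |>.2

lemma norm_Aq_prime_le {p : ℕ} (hp : p.Prime) (N : ℤ) :
    ‖Aq p N‖ ≤ 120 * (p : ℝ) ^ 2 / ((p : ℝ) - 1) ^ 3 := by
  have : Fact p.Prime := ⟨hp⟩
  have hp1 : (0 : ℝ) < (p : ℝ) - 1 := by
    have : (1 : ℝ) < p := by exact_mod_cast hp.one_lt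
    linarith
  have hY : ‖Yq p N‖ ≤ ((p : ℝ) - 1) * (120 * (p : ℝ) ^ 2) := by
    rw [Yq_eq_sum_units]
    refine (norm_sum_le_of_le _ fun h _ => (?_ : _ ≤ 120 * (p : ℝ) ^ 2)).trans ?_
    · rw [norm_mul, norm_mul, norm_mul, norm_mul, AddChar.norm_apply, one_mul]
      have e2 := norm_unitPowSum_le (p := p) (k := 2) (by norm_num) h
      have e3 := norm_unitPowSum_le (p := p) (k := 3) (by norm_num) h
      have e4 := norm_unitPowSum_le (p := p) (k := 4) (by norm_num) h
      have e5 := norm_unitPowSum_le (p := p) (k := 5) (by norm_num) h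
      push_cast at e2 e3 e4 e5
      calc _ ≤ (2 * √(p : ℝ)) * (3 * √p) * (4 * √p) * (5 * √p) := by gcongr
        _ = 120 * (√(p : ℝ) ^ 2) ^ 2 := by ring
        _ = _ := by rw [Real.sq_sqrt (Nat.cast_nonneg _)]
    · rw [Finset.sum_const, card_units_zmod_prime, nsmul_eq_mul, Nat.cast_pred hp.pos]
  rw [Aq, Nat.totient_prime hp, norm_div, norm_pow, Complex.norm_natCast, Nat.cast_pred hp.pos,
    div_le_div_iff₀ (by positivity) (by positivity)]
  calc _ ≤ ((p : ℝ) - 1) * (120 * (p : ℝ) ^ 2) * ((p : ℝ) - 1) ^ 3 := by gcongr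
    _ = _ := by ring

lemma sum_zmod_prime_eq_add_sum_units {p : ℕ} [Fact p.Prime] (f : ZMod p → ℂ) :
    ∑ h : ZMod p, f h = f 0 + ∑ u : (ZMod p)ˣ, f u := by
  rw [Fintype.sum_eq_add_sum_subtype_ne f 0, ← Equiv.sum_comp unitsEquivNeZero]
  rfl

/-- The number of ways to write `N` as `a² + b³ + c⁴ + d⁵` with units `a, b, c, d` of `ZMod p`. -/
noncomputable def unitRepCount (p : ℕ) [Fact p.Prime] (N : ZMod p) : ℕ :=
  (Finset.univ.filter fun x : (((ZMod p)ˣ × (ZMod p)ˣ) × (ZMod p)ˣ) × (ZMod p)ˣ =>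
    (x.1.1.1 : ZMod p) ^ 2 + (x.1.1.2 : ZMod p) ^ 3 + (x.1.2 : ZMod p) ^ 4
      + (x.2 : ZMod p) ^ 5 = N).card

lemma totient_pow_add_Yq_eq {p : ℕ} [Fact p.Prime] (N : ℤ) :
    ((p - 1 : ℕ) : ℂ) ^ 4 + Yq p N = (p : ℂ) * unitRepCount p (N : ZMod p) := by
  have hprod : ∀ h : ZMod p, ZMod.stdAddChar (-(N : ZMod p) * h) * unitPowSum p 2 h *
      unitPowSum p 3 h * unitPowSum p 4 h * unitPowSum p 5 h =
      ∑ x : (((ZMod p)ˣ × (ZMod p)ˣ) × (ZMod p)ˣ) × (ZMod p)ˣ,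
        ZMod.stdAddChar (h * ((x.1.1.1 : ZMod p) ^ 2 + (x.1.1.2 : ZMod p) ^ 3
          + (x.1.2 : ZMod p) ^ 4 + (x.2 : ZMod p) ^ 5 - (N : ZMod p))) := by
    intro h
    have h2 : ZMod.stdAddChar (-(N : ZMod p) * h) * unitPowSum p 2 h = ∑ u : (ZMod p)ˣ,
        ZMod.stdAddChar (-(N : ZMod p) * h) * ZMod.stdAddChar (h * (u : ZMod p) ^ 2) := by
      rw [unitPowSum, Finset.mul_sum]
    rw [h2, unitPowSum, unitPowSum, unitPowSum]
    rw [Finset.sum_mul_sum, ← Fintype.sum_prod_type', Finset.sum_mul_sum,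
      ← Fintype.sum_prod_type', Finset.sum_mul_sum, ← Fintype.sum_prod_type']
    refine Finset.sum_congr rfl fun x _ => ?_
    simp only [← AddChar.map_add_eq_mul]
    congr 1
    ring
  have hzero : ∀ k, unitPowSum p k 0 = ((p - 1 : ℕ) : ℂ) := by
    intro k
    simp only [unitPowSum, zero_mul, AddChar.map_zero_eq_one, Finset.sum_const,
      card_units_zmod_prime, nsmul_eq_mul, mul_one]
  have hall := sum_zmod_prime_eq_add_sum_units (p := p)
    (fun h => ZMod.stdAddChar (-(N : ZMod p) * h) * unitPowSum p 2 h *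
      unitPowSum p 3 h * unitPowSum p 4 h * unitPowSum p 5 h)
  rw [← Yq_eq_sum_units] at hall
  simp only [hzero, mul_zero, AddChar.map_zero_eq_one, one_mul] at hall
  rw [show ((p - 1 : ℕ) : ℂ) ^ 4 = ((p - 1 : ℕ) : ℂ) * ((p - 1 : ℕ) : ℂ) * ((p - 1 : ℕ) : ℂ) *
    ((p - 1 : ℕ) : ℂ) by ring, ← hall]
  simp_rw [hprod]
  rw [Finset.sum_comm, unitRepCount, Finset.card_filter, Nat.cast_sum, Finset.mul_sum]
  refine Finset.sum_congr rfl fun x _ => ?_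
  rw [AddChar.sum_mulShift _ (ZMod.isPrimitive_stdAddChar p), ZMod.card]
  simp only [sub_eq_zero]
  split_ifs <;> simp

lemma sFactor_prime_eq {p : ℕ} [Fact p.Prime] (N : ℤ) :
    sFactor p N = ((p * unitRepCount p (N : ZMod p) / ((p : ℝ) - 1) ^ 4 : ℝ) : ℂ) := by
  have hp : p.Prime := Fact.out
  have h0 : ((p - 1 : ℕ) : ℂ) ≠ 0 :=
    Nat.cast_ne_zero.2 (Nat.sub_pos_of_lt hp.one_lt).ne'
  have h := totient_pow_add_Yq_eq (p := p) N
  rw [sFactor_eq_one_add hp, Aq, Nat.totient_prime hp, eq_sub_of_add_eq' h, ← Nat.cast_pred hp.pos]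
  push_cast
  field_simp
  ring

/-- The `k`-th powers of the units of `ZMod p`. -/
noncomputable def unitPowers (p k : ℕ) [Fact p.Prime] : Finset (ZMod p) :=
  Finset.univ.image fun u : (ZMod p)ˣ => (u : ZMod p) ^ k

lemma le_mul_card_unitPowers {p k : ℕ} [Fact p.Prime] (hk : 0 < k) :
    p - 1 ≤ k * (unitPowers p k).card := by
  rw [← card_units_zmod_prime p]
  exact Finset.card_le_mul_card_image _ _ fun c _ => card_units_pow_eq_le hk c

lemma unitPowers_nonempty (p k : ℕ) [Fact p.Prime] : (unitPowers p k).Nonempty :=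
  Finset.univ_nonempty.image _

open scoped Pointwise in
lemma exists_units_pow_sum_of_large {p : ℕ} [Fact p.Prime] (hp17 : 17 ≤ p) (N : ZMod p) :
    ∃ a b c d : (ZMod p)ˣ,
      (a : ZMod p) ^ 2 + (b : ZMod p) ^ 3 + (c : ZMod p) ^ 4 + (d : ZMod p) ^ 5 = N := by
  have hp : p.Prime := Fact.out
  have h2 := le_mul_card_unitPowers (p := p) (k := 2) (by norm_num)
  have h3 := le_mul_card_unitPowers (p := p) (k := 3) (by norm_num)
  have h4 := le_mul_card_unitPowers (p := p) (k := 4) (by norm_num)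
  have h5 := le_mul_card_unitPowers (p := p) (k := 5) (by norm_num)
  have n2 := unitPowers_nonempty p 2
  have n3 := unitPowers_nonempty p 3
  have n4 := unitPowers_nonempty p 4
  have n5 := unitPowers_nonempty p 5
  have c1 := ZMod.cauchy_davenport hp n2 n3
  have c2 := ZMod.cauchy_davenport hp (n2.add n3) n4
  have c3 := ZMod.cauchy_davenport hp ((n2.add n3).add n4) n5
  have hcard : (unitPowers p 2 + unitPowers p 3 + unitPowers p 4 + unitPowers p 5).card =
      Fintype.card (ZMod p) := by
    refine le_antisymm (Finset.card_le_univ _) ?_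
    rw [ZMod.card]
    omega
  have hmem : N ∈ unitPowers p 2 + unitPowers p 3 + unitPowers p 4 + unitPowers p 5 := by
    rw [(Finset.card_eq_iff_eq_univ _).1 hcard]
    exact Finset.mem_univ _
  simp only [unitPowers, Finset.mem_add, Finset.mem_image, Finset.mem_univ, true_and] at hmem
  obtain ⟨_, ⟨_, ⟨_, ⟨a, rfl⟩, _, ⟨b, rfl⟩, rfl⟩, _, ⟨c, rfl⟩, rfl⟩, _, ⟨d, rfl⟩, h⟩ := hmem
  exact ⟨a, b, c, d, h⟩

lemma exists_units_pow_sum {p : ℕ} [hp : Fact p.Prime] {N : ℤ} (hN : Even N) :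
    ∃ a b c d : (ZMod p)ˣ,
      (a : ZMod p) ^ 2 + (b : ZMod p) ^ 3 + (c : ZMod p) ^ 4 + (d : ZMod p) ^ 5 = N := by
  have small2 : (1 : ZMod 2) ^ 2 + 1 ^ 3 + 1 ^ 4 + 1 ^ 5 = 0 := by decide
  have small3 : ∀ n : ZMod 3, ∃ a b : ZMod 3, a ≠ 0 ∧ b ≠ 0 ∧ 1 + a ^ 3 + 1 + b ^ 5 = n := by
    decide
  have small5 : ∀ n : ZMod 5, ∃ a b : ZMod 5, a ≠ 0 ∧ b ≠ 0 ∧ a ^ 2 + b ^ 3 + 1 + 1 = n := by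
    decide
  have small7 : ∀ n : ZMod 7, ∃ a b : ZMod 7, a ≠ 0 ∧ b ≠ 0 ∧ a ^ 2 + 1 + 1 + b ^ 5 = n := by
    decide
  have small11 : ∀ n : ZMod 11, ∃ a b : ZMod 11, a ≠ 0 ∧ b ≠ 0 ∧ a ^ 2 + b ^ 3 + 1 + 1 = n := by
    decide
  have small13 : ∀ n : ZMod 13, ∃ a b : ZMod 13, a ≠ 0 ∧ b ≠ 0 ∧ a ^ 2 + 1 + 1 + b ^ 5 = n := by
    decide
  have hp' := hp.out
  suffices h : 17 ≤ p ∨ ∃ a b c d : ZMod p, (a ≠ 0 ∧ b ≠ 0 ∧ c ≠ 0 ∧ d ≠ 0) ∧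
      a ^ 2 + b ^ 3 + c ^ 4 + d ^ 5 = N by
    rcases h with h | ⟨a, b, c, d, ⟨ha, hb, hc, hd⟩, h⟩
    · exact exists_units_pow_sum_of_large h _
    · exact ⟨Units.mk0 a ha, Units.mk0 b hb, Units.mk0 c hc, Units.mk0 d hd, h⟩
  by_cases h17 : 17 ≤ p
  · exact Or.inl h17
  right
  have twoThree : (∀ n : ZMod p, ∃ a b : ZMod p, a ≠ 0 ∧ b ≠ 0 ∧ a ^ 2 + b ^ 3 + 1 + 1 = n) →
      ∃ a b c d : ZMod p, (a ≠ 0 ∧ b ≠ 0 ∧ c ≠ 0 ∧ d ≠ 0) ∧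
        a ^ 2 + b ^ 3 + c ^ 4 + d ^ 5 = N := by
    intro h
    obtain ⟨a, b, ha, hb, h⟩ := h N
    exact ⟨a, b, 1, 1, ⟨ha, hb, one_ne_zero, one_ne_zero⟩, by simpa using h⟩
  have twoFive : (∀ n : ZMod p, ∃ a d : ZMod p, a ≠ 0 ∧ d ≠ 0 ∧ a ^ 2 + 1 + 1 + d ^ 5 = n) →
      ∃ a b c d : ZMod p, (a ≠ 0 ∧ b ≠ 0 ∧ c ≠ 0 ∧ d ≠ 0) ∧
        a ^ 2 + b ^ 3 + c ^ 4 + d ^ 5 = N := by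
    intro h
    obtain ⟨a, d, ha, hd, h⟩ := h N
    exact ⟨a, 1, 1, d, ⟨ha, one_ne_zero, one_ne_zero, hd⟩, by simpa using h⟩
  have threeFive : (∀ n : ZMod p, ∃ b d : ZMod p, b ≠ 0 ∧ d ≠ 0 ∧ 1 + b ^ 3 + 1 + d ^ 5 = n) →
      ∃ a b c d : ZMod p, (a ≠ 0 ∧ b ≠ 0 ∧ c ≠ 0 ∧ d ≠ 0) ∧
        a ^ 2 + b ^ 3 + c ^ 4 + d ^ 5 = N := by
    intro h
    obtain ⟨b, d, hb, hd, h⟩ := h N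
    exact ⟨1, b, 1, d, ⟨one_ne_zero, hb, one_ne_zero, hd⟩, by simpa using h⟩
  have hcases : p = 2 ∨ p = 3 ∨ p = 5 ∨ p = 7 ∨ p = 11 ∨ p = 13 := by
    have : p ≤ 16 := by omega
    clear twoThree twoFive threeFive
    interval_cases p <;> first | omega | (exact absurd hp' (by norm_num))
  rcases hcases with rfl | rfl | rfl | rfl | rfl | rfl
  · refine ⟨1, 1, 1, 1, ⟨one_ne_zero, one_ne_zero, one_ne_zero, one_ne_zero⟩, ?_⟩
    rw [(ZMod.intCast_zmod_eq_zero_iff_dvd N 2).2 (by exact_mod_cast hN.two_dvd)]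
    exact small2
  · exact threeFive small3
  · exact twoThree small5
  · exact twoFive small7
  · exact twoThree small11
  · exact twoFive small13

lemma unitRepCount_pos {p : ℕ} [Fact p.Prime] {N : ℤ} (hN : Even N) :
    1 ≤ unitRepCount p (N : ZMod p) := by
  obtain ⟨a, b, c, d, h⟩ := exists_units_pow_sum (p := p) hN
  exact Finset.card_pos.2 ⟨(((a, b), c), d), Finset.mem_filter.2 ⟨Finset.mem_univ _, h⟩⟩

lemma exp_neg_div_le_one_sub {x : ℝ} (hx : x < 1) : Real.exp (-(x / (1 - x))) ≤ 1 - x := by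
  have h1 : 0 < 1 - x := by linarith
  rw [Real.exp_neg, inv_le_comm₀ (Real.exp_pos _) h1]
  refine le_trans (le_of_eq ?_) (Real.add_one_le_exp (x / (1 - x)))
  field_simp
  ring

lemma le_one_sub_norm_Aq {p : ℕ} (hp : p.Prime) (hlarge : 1000 ≤ p) (N : ℤ) :
    Real.exp (-240 * (1 / (p : ℝ))) ≤ 1 - ‖Aq p N‖ := by
  have hp1 : (1000 : ℝ) ≤ p := by exact_mod_cast hlarge
  have hA : ‖Aq p N‖ ≤ 125 / p := by
    refine (norm_Aq_prime_le hp N).trans ?_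
    obtain ⟨t, ht⟩ : ∃ t : ℝ, (p : ℝ) = t + 1 := ⟨p - 1, by ring⟩
    have ht1 : 999 ≤ t := by linarith
    rw [ht, add_sub_cancel_right, div_le_div_iff₀ (by positivity) (by positivity)]
    nlinarith [mul_nonneg (sub_nonneg.2 ht1) (sq_nonneg t), mul_nonneg (sub_nonneg.2 ht1)
      (by linarith : 0 ≤ t)]
  have hx : 125 / (p : ℝ) < 1 := by
    rw [div_lt_one (by linarith)]
    linarith
  calc Real.exp (-240 * (1 / (p : ℝ)))
      ≤ Real.exp (-((125 / (p : ℝ)) / (1 - 125 / p))) := by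
        refine Real.exp_le_exp.2 ?_
        have : (125 / (p : ℝ)) / (1 - 125 / p) ≤ 240 * (1 / (p : ℝ)) := by
          rw [div_le_iff₀ (by linarith), div_le_iff₀ (by linarith)]
          field_simp
          linarith
        linarith
    _ ≤ 1 - 125 / p := exp_neg_div_le_one_sub hx
    _ ≤ 1 - ‖Aq p N‖ := by linarith

lemma exists_sFactor_eq_ofReal {p : ℕ} (hp : p.Prime) {N : ℤ} (hN : Even N) :
    ∃ s : ℝ, sFactor p N = (s : ℂ) ∧
      (if p < 1000 then 1 / 1000 ^ 3 else (1 : ℝ)) * Real.exp (-240 * (1 / (p : ℝ))) ≤ s := by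
  have : Fact p.Prime := ⟨hp⟩
  refine ⟨_, sFactor_prime_eq N, ?_⟩
  have hp1 : (0 : ℝ) < (p : ℝ) - 1 := by
    have : (1 : ℝ) < p := by exact_mod_cast hp.one_lt
    linarith
  split_ifs with h
  · have hexp : Real.exp (-240 * (1 / (p : ℝ))) ≤ 1 := by
      rw [Real.exp_le_one_iff, neg_mul]
      exact neg_nonpos.2 (by positivity)
    have hM : (1 : ℝ) ≤ unitRepCount p (N : ZMod p) := by
      exact_mod_cast unitRepCount_pos (p := p) hN
    have hp2 : (p : ℝ) ≤ 1000 := by exact_mod_cast h.le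
    calc (1 / 1000 ^ 3 : ℝ) * Real.exp (-240 * (1 / (p : ℝ))) ≤ 1 / 1000 ^ 3 * 1 := by gcongr
      _ ≤ 1 / ((p : ℝ) - 1) ^ 3 := by
        rw [mul_one]
        gcongr
        linarith
      _ = ((p : ℝ) - 1) * 1 / ((p : ℝ) - 1) ^ 4 := by
        field_simp
      _ ≤ _ := by
        gcongr
        linarith
  · have hA := le_one_sub_norm_Aq hp (not_lt.1 h) N
    have heq := sFactor_prime_eq (p := p) N
    rw [sFactor_eq_one_add hp] at heq
    have hre := congrArg Complex.re heq
    rw [Complex.add_re, Complex.one_re, Complex.ofReal_re] at hre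
    rw [one_mul, ← hre]
    have := (abs_le.1 (Complex.abs_re_le_norm (Aq p N))).1
    linarith

lemma sum_one_div_prime_dyadic_le {k : ℕ} (hk : 0 < k) :
    ∑ p ∈ (Finset.Ico (2 ^ k) (2 ^ (k + 1))).filter Nat.Prime, (1 / (p : ℝ)) ≤ 4 * (1 / k) := by
  set S := (Finset.Ico (2 ^ k) (2 ^ (k + 1))).filter Nat.Prime with hS
  have hcard : k * S.card ≤ 4 * 2 ^ k := by
    have h1 : (2 ^ k) ^ S.card ≤ primorial (2 ^ (k + 1)) := by
      calc (2 ^ k) ^ S.card ≤ ∏ p ∈ S, p := Finset.pow_card_le_prod _ _ _ fun p hp =>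
            (Finset.mem_Ico.1 (Finset.mem_filter.1 hp).1).1
        _ ≤ primorial (2 ^ (k + 1)) := by
            refine Nat.le_of_dvd (primorial_pos _) (Finset.prod_primes_dvd _
              (fun p hp => (Finset.mem_filter.1 hp).2.prime) fun p hp => ?_)
            have hp' := Finset.mem_filter.1 hp
            exact hp'.2.dvd_primorial_iff.2 (Finset.mem_Ico.1 hp'.1).2.le
    have h2 := h1.trans (primorial_le_four_pow _)
    rw [← pow_mul, show 4 = 2 ^ 2 by norm_num, ← pow_mul,
      Nat.pow_le_pow_iff_right (by norm_num)] at h2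
    rw [pow_succ] at h2
    linarith
  have hk' : (0 : ℝ) < k := by exact_mod_cast hk
  calc ∑ p ∈ S, (1 / (p : ℝ)) ≤ ∑ _p ∈ S, (1 / (2 : ℝ) ^ k) := by
        refine Finset.sum_le_sum fun p hp => ?_
        have := (Finset.mem_Ico.1 (Finset.mem_filter.1 hp).1).1
        gcongr
        exact_mod_cast this
    _ = S.card / (2 : ℝ) ^ k := by rw [Finset.sum_const, nsmul_eq_mul, mul_one_div]
    _ ≤ 4 * (1 / k) := by
        rw [mul_one_div, div_le_div_iff₀ (by positivity) hk']
        exact_mod_cast (by linarith : S.card * k ≤ 4 * 2 ^ k)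

lemma sum_one_div_prime_lt_two_pow_le (K : ℕ) :
    ∑ p ∈ (Finset.range (2 ^ (K + 1))).filter Nat.Prime, (1 / (p : ℝ)) ≤
      4 * (harmonic K : ℝ) := by
  induction K with
  | zero =>
    rw [Finset.sum_eq_zero]
    · simp
    · intro p hp
      have h := Finset.mem_filter.1 hp
      have h1 := Finset.mem_range.1 h.1
      have h2 := h.2.two_le
      omega
  | succ K ih =>
    have hle : 2 ^ (K + 1) ≤ 2 ^ (K + 1 + 1) := Nat.pow_le_pow_right (by norm_num) (by omega)
    have hunion : (Finset.range (2 ^ (K + 1 + 1))).filter Nat.Prime =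
        (Finset.range (2 ^ (K + 1))).filter Nat.Prime ∪
          (Finset.Ico (2 ^ (K + 1)) (2 ^ (K + 1 + 1))).filter Nat.Prime := by
      ext p
      simp only [Finset.mem_union, Finset.mem_filter, Finset.mem_range, Finset.mem_Ico]
      grind
    have h := sum_one_div_prime_dyadic_le (k := K + 1) (by omega)
    have hdisj : Disjoint ((Finset.range (2 ^ (K + 1))).filter Nat.Prime)
        ((Finset.Ico (2 ^ (K + 1)) (2 ^ (K + 1 + 1))).filter Nat.Prime) := by
      rw [Finset.disjoint_left]
      intro p hp hp'
      have h1 := Finset.mem_range.1 (Finset.mem_filter.1 hp).1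
      have h2 := Finset.mem_Ico.1 (Finset.mem_filter.1 hp').1
      omega
    rw [harmonic_succ, hunion, Finset.sum_union hdisj]
    push_cast at h ⊢
    rw [one_div ((K : ℝ) + 1)] at h
    linarith

lemma sum_one_div_prime_le {P : ℝ} (hP : 2 ≤ P) :
    ∑ p ∈ (Finset.Icc 1 ⌊P⌋₊).filter Nat.Prime, (1 / (p : ℝ)) ≤
      4 * (1 + Real.log (Real.log P / Real.log 2)) := by
  set n := ⌊P⌋₊ with hn
  have hn2 : 2 ≤ n := Nat.le_floor (by exact_mod_cast hP)
  set K := Nat.log 2 n with hK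
  have hK1 : 1 ≤ K := Nat.log_pos (by norm_num) hn2
  have hKP : (K : ℝ) ≤ Real.log P / Real.log 2 := by
    rw [le_div_iff₀ (Real.log_pos (by norm_num)), ← Real.log_pow]
    refine Real.log_le_log (by positivity) (le_trans ?_ (Nat.floor_le (by linarith)))
    exact_mod_cast Nat.pow_log_le_self 2 (by omega : n ≠ 0)
  calc ∑ p ∈ (Finset.Icc 1 n).filter Nat.Prime, (1 / (p : ℝ))
      ≤ ∑ p ∈ (Finset.range (2 ^ (K + 1))).filter Nat.Prime, (1 / (p : ℝ)) := by
        refine Finset.sum_le_sum_of_subset_of_nonneg (Finset.filter_subset_filter _ ?_)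
          fun p _ _ => by positivity
        intro p hp
        exact Finset.mem_range.2 ((Finset.mem_Icc.1 hp).2.trans_lt
          (Nat.lt_pow_succ_log_self (by norm_num) n))
    _ ≤ 4 * (harmonic K : ℝ) := sum_one_div_prime_lt_two_pow_le K
    _ ≤ 4 * (1 + Real.log K) := by
        gcongr
        exact harmonic_le_one_add_log K
    _ ≤ 4 * (1 + Real.log (Real.log P / Real.log 2)) := by
        gcongr

lemma pow_le_prod_ite_lt {δ : ℝ} (hδ : 0 < δ) (hδ1 : δ ≤ 1) (m : ℕ) (S : Finset ℕ) :
    δ ^ m ≤ ∏ p ∈ S, (if p < m then δ else 1) := by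
  rw [← Finset.prod_filter, Finset.prod_const]
  refine pow_le_pow_of_le_one hδ.le hδ1 ?_
  calc (S.filter (· < m)).card ≤ (Finset.range m).card := Finset.card_le_card fun p hp =>
        Finset.mem_range.2 (Finset.mem_filter.1 hp).2
    _ = m := Finset.card_range m

/-- Lower bound for the singular series product:
`∏_{p ≤ P} s(p) ≫ (log P)^{-960}` uniformly in even `N`. -/
theorem singular_series_product_lower_bound :
    ∃ c : ℝ, 0 < c ∧ ∀ N : ℤ, Even N → ∀ P : ℝ, 2 ≤ P →
      c * Real.log P ^ (-(960 : ℝ)) ≤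
        (∏ p ∈ (Finset.Icc 1 ⌊P⌋₊).filter Nat.Prime, sFactor p N).re := by
  have hlog2 : 0 < Real.log 2 := Real.log_pos (by norm_num)
  refine ⟨(1 / 1000 ^ 3 : ℝ) ^ 1000 * (Real.exp (-960) * Real.log 2 ^ (960 : ℝ)),
    mul_pos (pow_pos (by positivity) _) (mul_pos (Real.exp_pos _) (Real.rpow_pos_of_pos hlog2 _)),
    fun N hN P hP => ?_⟩
  set S := (Finset.Icc 1 ⌊P⌋₊).filter Nat.Prime with hS
  have hprime : ∀ p ∈ S, p.Prime := fun p hp => (Finset.mem_filter.1 hp).2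
  choose! s hs hle using fun (p : ℕ) (hp : p.Prime) => exists_sFactor_eq_ofReal hp hN
  rw [Finset.prod_congr rfl fun p hp => hs p (hprime p hp), ← Complex.ofReal_prod,
    Complex.ofReal_re]
  have hlogP : 0 < Real.log P := Real.log_pos (by linarith)
  have hexp : Real.exp (-960) * Real.log 2 ^ (960 : ℝ) * Real.log P ^ (-(960 : ℝ)) ≤
      ∏ p ∈ S, Real.exp (-240 * (1 / (p : ℝ))) := by
    rw [← Real.exp_sum, ← Finset.mul_sum, Real.rpow_def_of_pos hlog2, Real.rpow_def_of_pos hlogP,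
      ← Real.exp_add, ← Real.exp_add, Real.exp_le_exp]
    have := sum_one_div_prime_le hP
    rw [Real.log_div hlogP.ne' hlog2.ne'] at this
    linarith
  have hpow := pow_le_prod_ite_lt (δ := 1 / 1000 ^ 3) (by positivity) (by norm_num) 1000 S
  calc _ = (1 / 1000 ^ 3 : ℝ) ^ 1000 *
        (Real.exp (-960) * Real.log 2 ^ (960 : ℝ) * Real.log P ^ (-(960 : ℝ))) := mul_assoc _ _ _
    _ ≤ (∏ p ∈ S, (if p < 1000 then 1 / 1000 ^ 3 else (1 : ℝ))) *
        ∏ p ∈ S, Real.exp (-240 * (1 / (p : ℝ))) :=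
      mul_le_mul hpow hexp
        (mul_nonneg (mul_nonneg (Real.exp_pos _).le (Real.rpow_nonneg hlog2.le _))
          (Real.rpow_nonneg hlogP.le _))
        (Finset.prod_nonneg fun p _ => by split_ifs <;> norm_num)
    _ = ∏ p ∈ S, (if p < 1000 then 1 / 1000 ^ 3 else (1 : ℝ)) *
        Real.exp (-240 * (1 / (p : ℝ))) := Finset.prod_mul_distrib.symm
    _ ≤ ∏ p ∈ S, s p := by
      refine Finset.prod_le_prod (fun p _ => ?_) fun p hp => hle p (hprime p hp)
      exact mul_nonneg (by split_ifs <;> norm_num) (Real.exp_pos _).le
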